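/- Let 0 ≤ q < 1 and let Ω ∈ U_q(s_p, M_p) be a p×p matrix with inverse Σ = Ω^{-1}. Let Σ̂ ∈ ℝ^{p×p} be a symmetric matrix and let λ ≥ 0 satisfy λ ≥ 3‖Ω‖_{L1}‖Σ̂ − Σ‖_∞ and ‖Ω‖_{L1}^{−q} λ^{1−q} s_p ≤ 1/2. Fix i ∈ {1,…,p} and set β* = Ω e_i (the i-th column of Ω, where e_i is the i-th standard basis vector). Then every global minimizer β̂ over ℝ^p of the function β ↦ (1/2)βᵀΣ̂β − e_iᵀβ + λ|β|_1 satisfies |β̂ − β*|_∞ ≤ 4 ‖Ω‖_{L1} λ. -/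

import Mathlib

open Matrix
open scoped BigOperators

/-- The ℓ1 norm of a vector in ℝ^p. -/
noncomputable def vecL1 {p : ℕ} (a : Fin p → ℝ) : ℝ := ∑ i, |a i|

/-- The ℓ∞ norm of a vector in ℝ^p. -/
noncomputable def vecLinf {p : ℕ} (a : Fin p → ℝ) : ℝ := ⨆ i, |a i|

/-- The entrywise supremum norm of a p×p matrix. -/
noncomputable def matLinf {p : ℕ} (A : Matrix (Fin p) (Fin p) ℝ) : ℝ := ⨆ i, ⨆ j, |A i j|

/-- The maximum absolute column-sum norm of a p×p matrix. -/
noncomputable def matL1 {p : ℕ} (A : Matrix (Fin p) (Fin p) ℝ) : ℝ := ⨆ j, ∑ i, |A i j|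

/-- The SCIO objective function β ↦ (1/2)βᵀ Σ̂ β − eᵀβ + λ|β|₁. -/
noncomputable def scioObj {p : ℕ} (S : Matrix (Fin p) (Fin p) ℝ) (e : Fin p → ℝ)
    (lam : ℝ) (β : Fin p → ℝ) : ℝ :=
  (1 / 2) * (β ⬝ᵥ S.mulVec β) - e ⬝ᵥ β + lam * vecL1 β

theorem abs_le_matLinf {p : ℕ} (A : Matrix (Fin p) (Fin p) ℝ) (i j : Fin p) :
    |A i j| ≤ matLinf A :=
  (le_ciSup (f := fun j => |A i j|) (Set.finite_range _).bddAbove j).trans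
    (le_ciSup (f := fun i => ⨆ j, |A i j|) (Set.finite_range _).bddAbove i)

theorem sum_abs_col_le_matL1 {p : ℕ} (A : Matrix (Fin p) (Fin p) ℝ) (j : Fin p) :
    ∑ i, |A i j| ≤ matL1 A :=
  le_ciSup (f := fun j => ∑ i, |A i j|) (Set.finite_range _).bddAbove j

theorem vecL1_nonneg {p : ℕ} (a : Fin p → ℝ) : 0 ≤ vecL1 a :=
  Finset.sum_nonneg fun _ _ => abs_nonneg _

theorem vecL1_add_le {p : ℕ} (a b : Fin p → ℝ) : vecL1 (a + b) ≤ vecL1 a + vecL1 b := by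
  unfold vecL1
  rw [← Finset.sum_add_distrib]
  exact Finset.sum_le_sum fun i _ => abs_add_le _ _

theorem vecL1_smul {p : ℕ} (t : ℝ) (a : Fin p → ℝ) : vecL1 (t • a) = |t| * vecL1 a := by
  simp [vecL1, abs_mul, Finset.mul_sum]

theorem vecL1_sub_le {p : ℕ} (a b : Fin p → ℝ) : vecL1 (a - b) ≤ vecL1 a + vecL1 b := by
  have h := vecL1_add_le a ((-1 : ℝ) • b)
  rw [vecL1_smul] at h
  simpa [sub_eq_add_neg] using h

/-- Hölder's inequality for the ℓ1 / ℓ∞ pairing, with an explicit bound on the entries. -/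
theorem abs_dotProduct_le {p : ℕ} {a b : Fin p → ℝ} {c : ℝ} (hb : ∀ i, |b i| ≤ c) :
    |a ⬝ᵥ b| ≤ vecL1 a * c := by
  unfold vecL1 dotProduct
  rw [Finset.sum_mul]
  refine (Finset.abs_sum_le_sum_abs _ _).trans (Finset.sum_le_sum fun i _ => ?_)
  rw [abs_mul]
  exact mul_le_mul_of_nonneg_left (hb i) (abs_nonneg _)

theorem abs_mulVec_le_matLinf_mul_vecL1 {p : ℕ} (A : Matrix (Fin p) (Fin p) ℝ)
    (v : Fin p → ℝ) (j : Fin p) : |(A *ᵥ v) j| ≤ matLinf A * vecL1 v := by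
  rw [mulVec, dotProduct_comm, mul_comm]
  exact abs_dotProduct_le fun k => abs_le_matLinf A j k

theorem abs_mulVec_le_matL1_mul {p : ℕ} {A : Matrix (Fin p) (Fin p) ℝ} (hA : A.IsSymm)
    {v : Fin p → ℝ} {c : ℝ} (hv : ∀ i, |v i| ≤ c) (j : Fin p) :
    |(A *ᵥ v) j| ≤ matL1 A * c := by
  refine (abs_dotProduct_le hv).trans
    (mul_le_mul_of_nonneg_right ?_ ((abs_nonneg _).trans (hv j)))
  refine le_trans (le_of_eq ?_) (sum_abs_col_le_matL1 A j)
  exact Finset.sum_congr rfl fun k _ => by rw [hA.apply]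

/-- An affine function that is nonnegative on the positive half-line has nonnegative
coefficients. -/
theorem nonneg_coeffs_of_forall_pos {a c : ℝ} (h : ∀ t : ℝ, 0 < t → 0 ≤ t * a + c) :
    0 ≤ a ∧ 0 ≤ c := by
  have ha : 0 ≤ a := by
    by_contra! hneg
    have h1 := h ((|c| + 1) / (-a)) (by have := abs_nonneg c; apply div_pos <;> linarith)
    have h2 : (|c| + 1) / (-a) * a = -(|c| + 1) := by
      have : a ≠ 0 := hneg.ne
      field_simp
    linarith [le_abs_self c]
  refine ⟨ha, ?_⟩
  by_contra! hneg
  have h1 := h (-c / (a + 1)) (by apply div_pos <;> linarith)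
  have h2 : -c / (a + 1) * a + c = c / (a + 1) := by
    have : a + 1 ≠ 0 := by linarith
    field_simp
    ring
  rw [h2] at h1
  exact absurd h1 (not_le.2 (div_neg_of_neg_of_pos hneg (by linarith)))

/-- Second-order expansion of the SCIO objective. -/
theorem scioObj_add {p : ℕ} {S : Matrix (Fin p) (Fin p) ℝ} (hS : S.IsSymm) (e : Fin p → ℝ)
    (lam : ℝ) (β v : Fin p → ℝ) :
    scioObj S e lam (β + v) = scioObj S e lam β + (1 / 2) * (v ⬝ᵥ S *ᵥ v)
      + v ⬝ᵥ (S *ᵥ β - e) + lam * (vecL1 (β + v) - vecL1 β) := by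
  have hsymm : β ⬝ᵥ S *ᵥ v = v ⬝ᵥ S *ᵥ β := by
    rw [dotProduct_mulVec, ← mulVec_transpose, hS.eq, dotProduct_comm]
  simp only [scioObj, mulVec_add, dotProduct_add, add_dotProduct, dotProduct_sub, hsymm,
    dotProduct_comm v e]
  ring

/-- At a minimizer of the SCIO objective the quadratic form is nonnegative and the gradient of
the smooth part is controlled by the penalty, in every direction. -/
theorem scioObj_minimizer_conditions {p : ℕ} {S : Matrix (Fin p) (Fin p) ℝ} (hS : S.IsSymm)
    {e : Fin p → ℝ} {lam : ℝ} (hlam : 0 ≤ lam) {β : Fin p → ℝ}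
    (hmin : ∀ γ, scioObj S e lam β ≤ scioObj S e lam γ) (v : Fin p → ℝ) :
    0 ≤ v ⬝ᵥ S *ᵥ v ∧ 0 ≤ v ⬝ᵥ (S *ᵥ β - e) + lam * vecL1 v := by
  have key := nonneg_coeffs_of_forall_pos (a := (1 / 2) * (v ⬝ᵥ S *ᵥ v))
    (c := v ⬝ᵥ (S *ᵥ β - e) + lam * vecL1 v) fun t ht => by
      have h := hmin (β + t • v)
      rw [scioObj_add hS] at h
      have hpen : vecL1 (β + t • v) - vecL1 β ≤ t * vecL1 v := by
        have := vecL1_add_le β (t • v)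
        rw [vecL1_smul, abs_of_pos ht] at this
        linarith
      have hpen' := mul_le_mul_of_nonneg_left hpen hlam
      simp only [mulVec_smul, dotProduct_smul, smul_dotProduct, smul_eq_mul] at h
      refine nonneg_of_mul_nonneg_right (a := t) ?_ ht
      linarith
  exact ⟨by linarith [key.1], key.2⟩

/-- The stationarity bound: every entry of the gradient of the smooth part is at most `lam`. -/
theorem abs_gradient_le_of_minimizer {p : ℕ} {S : Matrix (Fin p) (Fin p) ℝ} (hS : S.IsSymm)
    {e : Fin p → ℝ} {lam : ℝ} (hlam : 0 ≤ lam) {β : Fin p → ℝ}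
    (hmin : ∀ γ, scioObj S e lam β ≤ scioObj S e lam γ) (j : Fin p) :
    |(S *ᵥ β - e) j| ≤ lam := by
  have hL1 (x : ℝ) : vecL1 (Pi.single j x) = |x| := by
    unfold vecL1
    rw [Finset.sum_eq_single j (fun k _ hk => by simp [Pi.single_eq_of_ne hk]) (by simp)]
    simp
  have hpos := (scioObj_minimizer_conditions hS hlam hmin (Pi.single j 1)).2
  have hneg := (scioObj_minimizer_conditions hS hlam hmin (Pi.single j (-1))).2
  rw [hL1, single_dotProduct] at hpos hneg
  simp only [abs_one, abs_neg] at hpos hneg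
  exact abs_le.2 ⟨by linarith, by linarith⟩

/-- If the gradient of the smooth part at `βstar` is at most a third of a positive penalty level,
then the ℓ1 norm of a minimizer is at most twice that of `βstar`. -/
theorem vecL1_minimizer_le {p : ℕ} {S : Matrix (Fin p) (Fin p) ℝ} (hS : S.IsSymm)
    {e : Fin p → ℝ} {lam : ℝ} (hlam : 0 < lam) {β βstar : Fin p → ℝ}
    (hmin : ∀ γ, scioObj S e lam β ≤ scioObj S e lam γ)
    (hgrad : ∀ j, |(S *ᵥ βstar - e) j| ≤ lam / 3) :
    vecL1 β ≤ 2 * vecL1 βstar := by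
  have h := hmin βstar
  have hexp := scioObj_add hS e lam βstar (β - βstar)
  rw [add_sub_cancel] at hexp
  have hquad := (scioObj_minimizer_conditions hS hlam.le hmin (β - βstar)).1
  have hlin := (abs_le.1 (abs_dotProduct_le (a := β - βstar) hgrad)).1
  have hsub := mul_le_mul_of_nonneg_right (vecL1_sub_le β βstar) (by positivity : 0 ≤ lam / 3)
  refine le_of_mul_le_mul_left ?_ hlam
  linarith

/-- Theorem 1 (ℓ∞ bound): for Ω in the weak-sparsity class U_q(s_p, M_p), any global
minimizer β̂ of the SCIO objective with target column β* = Ω e_i satisfies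
|β̂ − β*|_∞ ≤ 4 ‖Ω‖_{L1} λ. -/
theorem scio_column_linf_bound {p : ℕ} (q s M : ℝ) (hq0 : 0 ≤ q) (hq1 : q < 1)
    (hs : 0 < s) (hM : 0 < M)
    (Ω : Matrix (Fin p) (Fin p) ℝ) (hΩsym : Ω.IsSymm) (hΩpd : Ω.PosDef)
    (hΩs : ∀ j, ∑ i, |Ω i j| ^ q ≤ s) (hΩM : matL1 Ω ≤ M)
    (Shat : Matrix (Fin p) (Fin p) ℝ) (hSsym : Shat.IsSymm)
    (lam : ℝ) (hlam0 : 0 ≤ lam)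
    (hlam1 : 3 * matL1 Ω * matLinf (Shat - Ω⁻¹) ≤ lam)
    (hlam2 : (matL1 Ω) ^ (-q) * lam ^ (1 - q) * s ≤ 1 / 2)
    (i : Fin p) (βstar : Fin p → ℝ) (hβstar : βstar = Ω.mulVec (Pi.single i 1))
    (βhat : Fin p → ℝ)
    (hmin : ∀ β : Fin p → ℝ,
      scioObj Shat (Pi.single i 1) lam βhat ≤ scioObj Shat (Pi.single i 1) lam β) :
    vecLinf (βhat - βstar) ≤ 4 * matL1 Ω * lam := by
  have hinv : Ω * Ω⁻¹ = 1 := mul_nonsing_inv _ ((isUnit_iff_isUnit_det _).1 hΩpd.isUnit)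
  have hinv' : Ω⁻¹ * Ω = 1 := nonsing_inv_mul _ ((isUnit_iff_isUnit_det _).1 hΩpd.isUnit)
  set D := Shat - Ω⁻¹ with hD
  set e : Fin p → ℝ := Pi.single i 1
  have hstar : Ω⁻¹ *ᵥ βstar = e := by rw [hβstar, mulVec_mulVec, hinv', one_mulVec]
  have hδ : 0 ≤ matLinf D := (abs_nonneg _).trans (abs_le_matLinf D i i)
  have hL : 0 ≤ matL1 Ω :=
    (Finset.sum_nonneg fun _ _ => abs_nonneg _).trans (sum_abs_col_le_matL1 Ω i)
  have hstarL1 : vecL1 βstar ≤ matL1 Ω := by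
    refine le_trans (le_of_eq ?_) (sum_abs_col_le_matL1 Ω i)
    simp [hβstar, e, vecL1]
  have hgrad (j : Fin p) : |(Shat *ᵥ βstar - e) j| ≤ lam / 3 := by
    have heq : Shat *ᵥ βstar - e = D *ᵥ βstar := by rw [hD, sub_mulVec, hstar]
    rw [heq]
    have := mul_le_mul_of_nonneg_left hstarL1 hδ
    linarith [abs_mulVec_le_matLinf_mul_vecL1 D βstar j]
  have hcross : matL1 Ω * matLinf D * vecL1 βhat ≤ matL1 Ω * lam := by
    rcases hlam0.eq_or_lt with h0 | hpos
    · have := mul_nonneg hL hδ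
      have hzero : matL1 Ω * matLinf D = 0 := by linarith
      rw [hzero, ← h0]
      simp
    · have hhat := vecL1_minimizer_le hSsym hpos hmin hgrad
      calc matL1 Ω * matLinf D * vecL1 βhat ≤ lam / 3 * (2 * matL1 Ω) :=
            mul_le_mul (by linarith) (by linarith) (vecL1_nonneg _) (by linarith)
        _ ≤ matL1 Ω * lam := by linarith [mul_nonneg hL hlam0]
  have hresid (j : Fin p) :
      |(Ω⁻¹ *ᵥ (βhat - βstar)) j| ≤ lam + matLinf D * vecL1 βhat := by
    have heq : Ω⁻¹ *ᵥ (βhat - βstar) = (Shat *ᵥ βhat - e) - D *ᵥ βhat := by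
      rw [hD, sub_mulVec, mulVec_sub, hstar]
      abel
    rw [heq]
    exact (abs_sub _ _).trans (add_le_add (abs_gradient_le_of_minimizer hSsym hlam0 hmin j)
      (abs_mulVec_le_matLinf_mul_vecL1 D βhat j))
  have : Nonempty (Fin p) := ⟨i⟩
  refine ciSup_le fun k => ?_
  have hk := abs_mulVec_le_matL1_mul hΩsym hresid k
  rw [mulVec_mulVec, hinv, one_mulVec] at hk
  linarith [mul_nonneg hL hlam0]
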